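/- Let ε>0, M≥1 an integer, ε<Δx, and 0<δx≤ε/(2M+1). For m∈{-M,…,M} let L_m∈ℤ, α_m∈[0,1/Δx) satisfy m/ε=L_m/Δx+α_m, set w_m=e^{2πi L_m δx/Δx}, and let V be the (2M+1)×(2M+1) Vandermonde matrix V_{m,k}=w_m^k (m=-M,…,M; k=0,…,2M). Then V is invertible and its inverse satisfies ‖V^{-1}‖_∞ ≤ (sin(π(1/ε−1/Δx)δx))^{-2M}, where ‖A‖_∞ denotes the maximum absolute row sum of A. -/

import Mathlib

open MeasureTheory Complex Filter
open scoped ENNReal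

/-- The Vandermonde matrix with nodes `w`, entries `V_{l,k} = w_l^k`. -/
noncomputable def vanderMat {n : ℕ} (w : Fin n → ℂ) : Matrix (Fin n) (Fin n) ℂ :=
  Matrix.of fun l k => w l ^ (k : ℕ)

/-!
By Lagrange interpolation the entries of `V⁻¹` are `coeff_k ∏_{j ≠ m} (X - w_j)` divided by
`∏_{j ≠ m} (w_m - w_j)`.  The phases `L_m δx/Δx` are a perturbation of the progression `m δx/ε`, so
going around the circle any two consecutive nodes are at least `g = (1/ε - 1/Δx) δx` apart.

For `M ≥ 2` the coefficient is at most a central binomial coefficient, every node but the two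
neighbours of `w_m` is at distance at least `2 sin (2πg) ≥ √2 · 2 sin (πg)` from it, and
`2 (2M + 1) (2M choose M) ≤ 8 ^ M`.

For `M = 1` that estimate loses too much in the middle row.  There the `m`-th entry has modulus
`|1 - p_m| / 2` with `p_m = cot B cot C`, where `A`, `B`, `C` are the angles of the triangle of
nodes, `A` at `w_m`.  Now `p_0 + p_1 + p_2 = 1` by the classical cotangent identity, and
`|p_m| ≤ (sin (πg))⁻²`.
-/

section InverseEntries

open Finset Polynomial

lemma isUnit_vanderMat {n : ℕ} {w : Fin n → ℂ} (hw : Function.Injective w) :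
    IsUnit (vanderMat w) :=
  (Matrix.isUnit_iff_isUnit_det _).2 (Matrix.det_vandermonde_ne_zero_iff.2 hw).isUnit

lemma vanderMat_mul_coeff_basis {n : ℕ} {w : Fin n → ℂ} (hw : Function.Injective w) :
    vanderMat w * Matrix.of (fun k m : Fin n => (Lagrange.basis univ w m).coeff k) = 1 := by
  ext l m
  have hdeg : (Lagrange.basis univ w m).natDegree < n := by
    rw [Lagrange.natDegree_basis hw.injOn (mem_univ m), card_univ, Fintype.card_fin]
    exact Nat.sub_lt m.pos one_pos
  calc (vanderMat w * Matrix.of fun k m : Fin n => (Lagrange.basis univ w m).coeff k) l m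
      = ∑ k : Fin n, (Lagrange.basis univ w m).coeff k * w l ^ (k : ℕ) := by
        simp only [Matrix.mul_apply, vanderMat, Matrix.of_apply, mul_comm]
    _ = (Lagrange.basis univ w m).eval (w l) := by
        rw [eval_eq_sum_range' hdeg, Fin.sum_univ_eq_sum_range
          (fun k => (Lagrange.basis univ w m).coeff k * w l ^ k)]
    _ = (1 : Matrix (Fin n) (Fin n) ℂ) l m := by
        rcases eq_or_ne l m with rfl | hlm
        · rw [Lagrange.eval_basis_self hw.injOn (mem_univ l), Matrix.one_apply_eq]
        · rw [Lagrange.eval_basis_of_ne hlm.symm (mem_univ l), Matrix.one_apply_ne hlm]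

lemma norm_vanderMat_inv_apply {n : ℕ} {w : Fin n → ℂ} (hw : Function.Injective w) (k m : Fin n) :
    ‖(vanderMat w)⁻¹ k m‖ =
      ‖(Lagrange.nodal (univ.erase m) w).coeff k‖ / ∏ j ∈ univ.erase m, ‖w m - w j‖ := by
  rw [Matrix.inv_eq_right_inv (vanderMat_mul_coeff_basis hw), Matrix.of_apply,
    Lagrange.basis_eq_prod_sub_inv_mul_nodal_div (mem_univ m),
    ← Lagrange.nodal_erase_eq_nodal_div (mem_univ m), coeff_C_mul, norm_mul,
    Lagrange.nodalWeight, norm_prod, div_eq_inv_mul]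
  simp only [norm_inv, prod_inv_distrib]

lemma norm_coeff_nodal_le_choose {ι : Type*} {w : ι → ℂ} {S : Finset ι}
    (hw : ∀ j ∈ S, ‖w j‖ ≤ 1) (k : ℕ) :
    ‖(Lagrange.nodal S w).coeff k‖ ≤ (#S).choose k := by
  have hroots : ∀ z ∈ ((Lagrange.nodal S w).map (RingHom.id ℂ)).roots, ‖z‖ ≤ 1 := by
    intro z hz
    have hz0 := isRoot_of_mem_roots hz
    rw [Polynomial.map_id, IsRoot.def, Lagrange.eval_nodal, prod_eq_zero_iff] at hz0
    obtain ⟨j, hj, hzj⟩ := hz0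
    exact sub_eq_zero.1 hzj ▸ hw j hj
  simpa only [Polynomial.map_id, one_pow, one_mul, Lagrange.natDegree_nodal] using
    coeff_le_of_roots_le k Lagrange.nodal_monic (IsAlgClosed.splits _) hroots

end InverseEntries

section ThreeNodes

open Finset Polynomial

/-- The cotangent of half the angle from `w` to `z`: for `z = e^{2iα}` and `w = e^{2iβ}` this is
`cot (α - β)`, read off `(z + w) / (z - w) = -i cot (α - β)`; it is `0` when `z = w`. -/
noncomputable def halfAngleCot (z w : ℂ) : ℝ := -((z + w) / (z - w)).im

lemma add_div_sub_eq_halfAngleCot {z w : ℂ} (h : ‖z‖ = ‖w‖) :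
    (z + w) / (z - w) = -(halfAngleCot z w * I) := by
  have hsq : z.re * z.re + z.im * z.im = w.re * w.re + w.im * w.im := by
    rw [← normSq_apply, ← normSq_apply, normSq_eq_norm_sq, normSq_eq_norm_sq, h]
  have hre : ((z + w) / (z - w)).re = 0 := by
    rw [div_re, ← add_div, add_re, add_im, sub_re, sub_im]
    exact div_eq_zero_iff.2 (Or.inl (by linear_combination hsq))
  apply Complex.ext
  · rw [hre, neg_re, re_ofReal_mul, I_re, mul_zero, neg_zero]
  · rw [neg_im, im_ofReal_mul, I_im, mul_one, halfAngleCot, neg_neg]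

lemma abs_halfAngleCot_le {z w : ℂ} (hz : ‖z‖ = 1) (hw : ‖w‖ = 1) {s : ℝ} (hs : 0 < s)
    (h : 2 * s ≤ ‖z - w‖) : |halfAngleCot z w| ≤ s⁻¹ := by
  calc |halfAngleCot z w| ≤ ‖z + w‖ / ‖z - w‖ := by
        rw [halfAngleCot, abs_neg, ← norm_div]
        exact abs_im_le_norm _
    _ ≤ 2 / (2 * s) := by
        gcongr
        linarith [norm_add_le z w]
    _ = s⁻¹ := by field_simp

lemma halfAngleCot_mul_cyclic {a b c : ℂ} (hnab : ‖a‖ = ‖b‖) (hnbc : ‖b‖ = ‖c‖)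
    (hab : a ≠ b) (hbc : b ≠ c) (hca : c ≠ a) :
    halfAngleCot c a * halfAngleCot a b + halfAngleCot a b * halfAngleCot b c +
      halfAngleCot b c * halfAngleCot c a = 1 := by
  have hab' := sub_ne_zero.2 hab
  have hbc' := sub_ne_zero.2 hbc
  have hca' := sub_ne_zero.2 hca
  have hquot : (c + a) / (c - a) * ((a + b) / (a - b)) + (a + b) / (a - b) * ((b + c) / (b - c)) +
      (b + c) / (b - c) * ((c + a) / (c - a)) = -1 := by
    field_simp
    ring
  rw [add_div_sub_eq_halfAngleCot hnab, add_div_sub_eq_halfAngleCot hnbc,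
    add_div_sub_eq_halfAngleCot (hnab.trans hnbc).symm] at hquot
  rw [← ofReal_inj]
  push_cast
  linear_combination -hquot + (halfAngleCot c a * halfAngleCot a b +
    halfAngleCot a b * halfAngleCot b c + halfAngleCot b c * halfAngleCot c a : ℂ) * I_sq

lemma norm_add_div_norm_sub_mul {a b c : ℂ} (ha : ‖a‖ = 1) (hb : ‖b‖ = 1) (hc : ‖c‖ = 1)
    (hab : a ≠ b) (hca : c ≠ a) :
    ‖b + c‖ / (‖a - b‖ * ‖c - a‖) = |1 - halfAngleCot c a * halfAngleCot a b| / 2 := by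
  have hab' := sub_ne_zero.2 hab
  have hca' := sub_ne_zero.2 hca
  have hfactor : ((1 - halfAngleCot c a * halfAngleCot a b : ℝ) : ℂ) =
      2 * a * (b + c) / ((a - b) * (c - a)) := by
    calc ((1 - halfAngleCot c a * halfAngleCot a b : ℝ) : ℂ)
        = 1 + (c + a) / (c - a) * ((a + b) / (a - b)) := by
          rw [add_div_sub_eq_halfAngleCot (hc.trans ha.symm),
            add_div_sub_eq_halfAngleCot (ha.trans hb.symm)]
          push_cast
          linear_combination -(halfAngleCot c a * halfAngleCot a b : ℂ) * I_sq
      _ = 2 * a * (b + c) / ((a - b) * (c - a)) := by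
          field_simp
          ring
  rw [← Real.norm_eq_abs, ← norm_real, hfactor]
  simp only [norm_div, norm_mul, ha, Complex.norm_ofNat]
  ring

lemma sum_abs_one_sub_le {p q r K : ℝ} (hsum : p + q + r = 1) (hK : 1 ≤ K)
    (hp : |p| ≤ K) (hq : |q| ≤ K) (hr : |r| ≤ K) :
    |1 - p| + |1 - q| + |1 - r| ≤ 2 * K := by
  rw [abs_le] at hp hq hr
  rcases abs_cases (1 - p) with ⟨habs_p, _⟩ | ⟨habs_p, _⟩ <;>
    rcases abs_cases (1 - q) with ⟨habs_q, _⟩ | ⟨habs_q, _⟩ <;>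
      rcases abs_cases (1 - r) with ⟨habs_r, _⟩ | ⟨habs_r, _⟩ <;>
        rw [habs_p, habs_q, habs_r] <;> linarith

lemma sum_norm_add_div_norm_sub_mul_le {a b c : ℂ} (ha : ‖a‖ = 1) (hb : ‖b‖ = 1) (hc : ‖c‖ = 1)
    {s : ℝ} (hs : 0 < s) (hab : 2 * s ≤ ‖a - b‖) (hbc : 2 * s ≤ ‖b - c‖) (hca : 2 * s ≤ ‖c - a‖) :
    ‖b + c‖ / (‖a - b‖ * ‖c - a‖) + ‖c + a‖ / (‖b - c‖ * ‖a - b‖) +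
      ‖a + b‖ / (‖c - a‖ * ‖b - c‖) ≤ (s ^ 2)⁻¹ := by
  have hne {x y : ℂ} (h : 2 * s ≤ ‖x - y‖) : x ≠ y := by
    rw [← sub_ne_zero, ← norm_pos_iff]
    linarith
  have hs1 : s ≤ 1 := by linarith [norm_sub_le a b]
  have hprod {x y : ℝ} (hx : |x| ≤ s⁻¹) (hy : |y| ≤ s⁻¹) : |x * y| ≤ (s ^ 2)⁻¹ := by
    rw [abs_mul, sq, mul_inv]
    gcongr
  have hu := abs_halfAngleCot_le ha hb hs hab
  have hv := abs_halfAngleCot_le hb hc hs hbc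
  have ht := abs_halfAngleCot_le hc ha hs hca
  rw [norm_add_div_norm_sub_mul ha hb hc (hne hab) (hne hca),
    norm_add_div_norm_sub_mul hb hc ha (hne hbc) (hne hab),
    norm_add_div_norm_sub_mul hc ha hb (hne hca) (hne hbc)]
  linarith [sum_abs_one_sub_le
    (halfAngleCot_mul_cyclic (ha.trans hb.symm) (hb.trans hc.symm) (hne hab) (hne hbc) (hne hca))
    ((one_le_inv₀ (by positivity)).2 (pow_le_one₀ hs.le hs1)) (hprod ht hu) (hprod hu hv)
    (hprod hv ht)]

lemma injective_of_pairwise_le_norm_sub {ι E : Type*} [NormedAddCommGroup E] {w : ι → E} {d : ℝ}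
    (hd : 0 < d) (hsep : Pairwise fun i j => d ≤ ‖w i - w j‖) : Function.Injective w := by
  intro i j hij
  by_contra hne
  exact hd.not_ge (by simpa only [hij, sub_self, norm_zero] using hsep hne)

lemma sum_norm_vanderMat_inv_le_of_three {w : Fin 3 → ℂ} (hw : ∀ j, ‖w j‖ = 1) {s : ℝ}
    (hs : 0 < s) (hsep : Pairwise fun i j => 2 * s ≤ ‖w i - w j‖) (k : Fin 3) :
    ∑ m, ‖(vanderMat w)⁻¹ k m‖ ≤ (s ^ 2)⁻¹ := by
  have hentry (m : Fin 3) : ‖(vanderMat w)⁻¹ k m‖ =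
      ‖((X - C (w (m + 1))) * (X - C (w (m + 2)))).coeff k‖ /
        (‖w m - w (m + 1)‖ * ‖w (m + 2) - w m‖) := by
    have herase : univ.erase m = {m + 1, m + 2} := by decide +revert
    have hne : m + 1 ≠ m + 2 := by decide +revert
    rw [norm_vanderMat_inv_apply (injective_of_pairwise_le_norm_sub (by positivity) hsep), herase,
      Lagrange.nodal, prod_pair hne, prod_pair hne, norm_sub_rev (w (m + 2))]
  have hcoeff (a b : ℂ) : (X - C a) * (X - C b) = X ^ 2 - C (a + b) * X + C (a * b) := by
    rw [C_add, C_mul]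
    ring
  have h01 : 2 * s ≤ ‖w 0 - w 1‖ := hsep (by decide)
  have h12 : 2 * s ≤ ‖w 1 - w 2‖ := hsep (by decide)
  have h20 : 2 * s ≤ ‖w 2 - w 0‖ := hsep (by decide)
  have houter : 1 / (‖w 0 - w 1‖ * ‖w 2 - w 0‖) + 1 / (‖w 1 - w 2‖ * ‖w 0 - w 1‖) +
      1 / (‖w 2 - w 0‖ * ‖w 1 - w 2‖) ≤ (s ^ 2)⁻¹ := by
    calc _ ≤ 1 / ((2 * s) * (2 * s)) + 1 / ((2 * s) * (2 * s)) + 1 / ((2 * s) * (2 * s)) := by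
          gcongr
      _ = 3 / 4 * (s ^ 2)⁻¹ := by
          field_simp
          norm_num
      _ ≤ (s ^ 2)⁻¹ := mul_le_of_le_one_left (by positivity) (by norm_num)
  have hmiddle := sum_norm_add_div_norm_sub_mul_le (hw 0) (hw 1) (hw 2) hs h01 h12 h20
  simp only [Fin.sum_univ_three, hentry, hcoeff]
  fin_cases k
  · simpa [coeff_X, hw, coeff_C] using houter
  · simpa [coeff_X, coeff_C, ← neg_add_rev, -neg_add_rev] using hmiddle
  · simpa [coeff_X, hw, coeff_C] using houter

end ThreeNodes

section ManyNodes

open Finset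

lemma pow_card_mul_pow_le_prod {ι : Type*} {S : Finset ι} {f : ι → ℝ} {d r : ℝ} {p : ℕ}
    (hd : 0 ≤ d) (hr : 1 ≤ r) (hf : ∀ j ∈ S, d ≤ f j) (hclose : #{j ∈ S | f j < r * d} ≤ p) :
    d ^ #S * r ^ (#S - p) ≤ ∏ j ∈ S, f j := by
  have hfar : #S - p ≤ #{j ∈ S | ¬ f j < r * d} := by
    have := S.card_filter_add_card_filter_not (fun j => f j < r * d)
    omega
  calc d ^ #S * r ^ (#S - p) ≤ d ^ #S * r ^ #{j ∈ S | ¬ f j < r * d} := by gcongr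
    _ = ∏ j ∈ S, d * if f j < r * d then 1 else r := by
        rw [prod_mul_distrib, prod_const, prod_ite, prod_const_one, one_mul, prod_const]
    _ ≤ ∏ j ∈ S, f j := by
        refine prod_le_prod (fun j _ => by positivity) fun j hj => ?_
        split_ifs with h
        · simpa only [mul_one] using hf j hj
        · simpa only [mul_comm r] using not_lt.1 h

lemma norm_vanderMat_inv_apply_le {n p : ℕ} {w : Fin n → ℂ} (hw : ∀ j, ‖w j‖ ≤ 1) {d r : ℝ}
    (hd : 0 < d) (hr : 1 ≤ r) (hsep : Pairwise fun i j => d ≤ ‖w i - w j‖) {m : Fin n}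
    (hclose : #{j ∈ univ.erase m | ‖w m - w j‖ < r * d} ≤ p) (k : Fin n) :
    ‖(vanderMat w)⁻¹ k m‖ ≤ (n - 1).choose k / (d ^ (n - 1) * r ^ (n - 1 - p)) := by
  have hcard : #(univ.erase m) = n - 1 := by
    rw [card_erase_of_mem (mem_univ m), card_univ, Fintype.card_fin]
  rw [norm_vanderMat_inv_apply (injective_of_pairwise_le_norm_sub hd hsep), ← hcard]
  gcongr
  · exact norm_coeff_nodal_le_choose (fun j _ => hw j) k
  · exact pow_card_mul_pow_le_prod hd.le hr (fun j hj => hsep (ne_of_mem_erase hj).symm) hclose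

lemma two_mul_succ_mul_centralBinom_le {M : ℕ} (hM : 2 ≤ M) :
    2 * ((2 * M + 1) * M.centralBinom) ≤ 8 ^ M := by
  induction M, hM using Nat.le_induction with
  | base => decide
  | succ M _ ih =>
    refine Nat.le_of_mul_le_mul_left ?_ M.succ_pos
    calc (M + 1) * (2 * ((2 * (M + 1) + 1) * (M + 1).centralBinom))
        = 2 * (2 * M + 3) * ((M + 1) * (M + 1).centralBinom) := by ring
      _ = 2 * (2 * M + 3) * (2 * ((2 * M + 1) * M.centralBinom)) := by
          rw [Nat.succ_mul_centralBinom_succ]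
          ring
      _ ≤ 8 * (M + 1) * 8 ^ M := Nat.mul_le_mul (by omega) ih
      _ = (M + 1) * 8 ^ (M + 1) := by ring

lemma sum_norm_vanderMat_inv_le_of_card_close_le_two {M : ℕ} (hM : 2 ≤ M)
    {w : Fin (2 * M + 1) → ℂ} (hw : ∀ j, ‖w j‖ ≤ 1) {s : ℝ} (hs : 0 < s)
    (hsep : Pairwise fun i j => 2 * s ≤ ‖w i - w j‖)
    (hclose : ∀ m, #{j ∈ univ.erase m | ‖w m - w j‖ < √2 * (2 * s)} ≤ 2) (k : Fin (2 * M + 1)) :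
    ∑ m, ‖(vanderMat w)⁻¹ k m‖ ≤ (s ^ (2 * M))⁻¹ := by
  have hden : 2 * ((2 * s) ^ (2 * M) * √2 ^ (2 * M - 2)) = 8 ^ M * s ^ (2 * M) := by
    calc 2 * ((2 * s) ^ (2 * M) * √2 ^ (2 * M - 2))
        = (2 * s) ^ (2 * M) * (√2 ^ (2 * M - 2) * √2 ^ 2) := by
          rw [Real.sq_sqrt zero_le_two]
          ring
      _ = (2 ^ 2 * 2) ^ M * s ^ (2 * M) := by
          rw [← pow_add, Nat.sub_add_cancel (by omega), pow_mul √2, Real.sq_sqrt zero_le_two,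
            mul_pow 2 s, pow_mul 2, mul_pow]
          ring
      _ = 8 ^ M * s ^ (2 * M) := by norm_num
  have hentry (m) : ‖(vanderMat w)⁻¹ k m‖ ≤ 2 * M.centralBinom / (8 ^ M * s ^ (2 * M)) := by
    calc ‖(vanderMat w)⁻¹ k m‖
        ≤ (2 * M).choose k / ((2 * s) ^ (2 * M) * √2 ^ (2 * M - 2)) :=
          norm_vanderMat_inv_apply_le hw (by positivity) (Real.one_le_sqrt.2 one_le_two) hsep
            (hclose m) k
      _ ≤ M.centralBinom / ((2 * s) ^ (2 * M) * √2 ^ (2 * M - 2)) := by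
          gcongr
          exact Nat.choose_le_centralBinom _ _
      _ = 2 * M.centralBinom / (8 ^ M * s ^ (2 * M)) := by
          rw [← hden, mul_div_mul_left _ _ two_ne_zero]
  have hbinom : (2 * ((2 * M + 1) * M.centralBinom) : ℝ) ≤ 8 ^ M :=
    mod_cast two_mul_succ_mul_centralBinom_le hM
  calc ∑ m, ‖(vanderMat w)⁻¹ k m‖
      ≤ (2 * M + 1 : ℕ) • (2 * M.centralBinom / (8 ^ M * s ^ (2 * M)) : ℝ) := by
        simpa only [card_univ, Fintype.card_fin] using
          sum_le_card_nsmul univ _ _ fun m _ => hentry m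
    _ = 2 * ((2 * M + 1) * M.centralBinom) / 8 ^ M * (s ^ (2 * M))⁻¹ := by
        rw [nsmul_eq_mul]
        push_cast
        field_simp
    _ ≤ (s ^ (2 * M))⁻¹ :=
        mul_le_of_le_one_left (by positivity) ((div_le_one (by positivity)).2 hbinom)

end ManyNodes

section CyclicSeparation

open Finset
open scoped Real FourierTransform

/-- The points `t 0, t 1, …` follow each other around `ℝ / ℤ` in this order with all consecutive
gaps, including the one from the last point back to `t 0`, at least `g`.  Encoded by bounding below
both arcs between `t i` and `t j` by `g` times the number of gaps they contain. -/
def IsCyclicallySeparated (g : ℝ) {n : ℕ} (t : Fin n → ℝ) : Prop :=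
  ∀ ⦃i j : Fin n⦄, i < j →
    ((j : ℕ) - (i : ℕ) : ℝ) * g ≤ t j - t i ∧
      t j - t i ≤ 1 - (n - ((j : ℕ) - (i : ℕ)) : ℝ) * g

lemma isCyclicallySeparated_of_abs_sub_le {n : ℕ} {t : Fin n → ℝ} {a b : ℝ} (ha : n * a ≤ 1)
    (hb : 0 ≤ b) (ht : ∀ i j : Fin n, |t j - t i - ((j : ℕ) - (i : ℕ) : ℝ) * a| ≤ b) :
    IsCyclicallySeparated (a - b) t := by
  intro i j hij
  obtain ⟨hlower, hupper⟩ := abs_le.1 (ht i j)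
  have hgap : (1 : ℝ) ≤ (j : ℕ) - (i : ℕ) := by
    rw [le_sub_iff_add_le']
    exact_mod_cast Nat.succ_le_of_lt hij
  have hwrap : (1 : ℝ) ≤ n - ((j : ℕ) - (i : ℕ)) := by
    have : ((j : ℕ) + 1 : ℝ) ≤ n := mod_cast j.isLt
    linarith [(i : ℕ).cast_nonneg (α := ℝ)]
  have hgap_b := mul_le_mul_of_nonneg_right hgap hb
  have hwrap_b := mul_le_mul_of_nonneg_right hwrap hb
  constructor <;> linarith

lemma isCyclicallySeparated_of_frequency_decomposition {ε Δx δx : ℝ} {M : ℕ} {L α : ℤ → ℝ}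
    (hε : 0 < ε) (hδx : 0 ≤ δx) (hδx' : δx ≤ ε / (2 * M + 1))
    (hdecomp : ∀ m : ℤ, |m| ≤ (M : ℤ) →
      (m : ℝ) / ε = L m / Δx + α m ∧ 0 ≤ α m ∧ α m < 1 / Δx) :
    IsCyclicallySeparated ((1 / ε - 1 / Δx) * δx)
      fun m : Fin (2 * M + 1) => L ((m : ℤ) - (M : ℤ)) * δx / Δx := by
  have hindex (m : Fin (2 * M + 1)) : |(m : ℤ) - (M : ℤ)| ≤ M := by
    rw [abs_le]
    omega
  have hΔx : 0 ≤ 1 / Δx := (hdecomp 0 (by simp)).2.1.trans (hdecomp 0 (by simp)).2.2.le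
  have hstep : ((2 * M + 1 : ℕ) : ℝ) * (1 / ε * δx) ≤ 1 := by
    push_cast
    rw [le_div_iff₀ (by positivity)] at hδx'
    rw [mul_left_comm, one_div, inv_mul_le_one₀ hε]
    linarith
  rw [sub_mul]
  refine isCyclicallySeparated_of_abs_sub_le hstep (by positivity) fun i j => ?_
  obtain ⟨hLi, hαi, hαi'⟩ := hdecomp _ (hindex i)
  obtain ⟨hLj, hαj, hαj'⟩ := hdecomp _ (hindex j)
  push_cast at hLi hLj
  have hdev : L ((j : ℤ) - M) * δx / Δx - L ((i : ℤ) - M) * δx / Δx -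
      ((j : ℕ) - (i : ℕ) : ℝ) * (1 / ε * δx) = (α ((i : ℤ) - M) - α ((j : ℤ) - M)) * δx := by
    linear_combination δx * hLi - δx * hLj
  rw [hdev, abs_mul, abs_of_nonneg hδx]
  gcongr
  rw [abs_le]
  constructor <;> linarith

lemma sin_le_sin_of_le_of_le_pi_sub {x y : ℝ} (hx : -(π / 2) ≤ x) (hxy : x ≤ y) (hy : y ≤ π - x) :
    Real.sin x ≤ Real.sin y := by
  rcases le_total y (π / 2) with h | h
  · exact Real.sin_le_sin_of_le_of_le_pi_div_two hx h hxy
  · rw [← Real.sin_pi_sub y]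
    exact Real.sin_le_sin_of_le_of_le_pi_div_two hx (by linarith) (by linarith)

lemma sqrt_two_mul_sin_le_sin_two_mul {x : ℝ} (hx : 0 ≤ x) (hx' : x ≤ π / 4) :
    √2 * Real.sin x ≤ Real.sin (2 * x) := by
  have hsin : 0 ≤ Real.sin x := Real.sin_nonneg_of_nonneg_of_le_pi hx (by linarith)
  have hcos : √2 / 2 ≤ Real.cos x := by
    rw [← Real.cos_pi_div_four]
    exact Real.cos_le_cos_of_nonneg_of_le_pi hx (by linarith) hx'
  rw [Real.sin_two_mul]
  linarith [mul_le_mul_of_nonneg_right hcos hsin]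

lemma coe_fourierChar_eq_exp (x : ℝ) : (𝐞 x : ℂ) = Complex.exp (2 * π * I * x) := by
  rw [Real.fourierChar_apply]
  push_cast
  ring_nf

lemma norm_fourierChar_sub_fourierChar (x y : ℝ) :
    ‖(𝐞 x : ℂ) - 𝐞 y‖ = 2 * |Real.sin (π * (x - y))| := by
  have hfactor : (𝐞 x : ℂ) - 𝐞 y = 𝐞 y * (Complex.exp (I * (2 * π * (x - y) : ℝ)) - 1) := by
    rw [mul_sub, mul_one, Real.fourierChar_apply, Real.fourierChar_apply, ← Complex.exp_add]
    congr 2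
    push_cast
    ring
  rw [hfactor, norm_mul, Circle.norm_coe, one_mul, norm_exp_I_mul_ofReal_sub_one, Real.norm_eq_abs,
    abs_mul, abs_two]
  congr 3
  ring

namespace IsCyclicallySeparated

variable {n : ℕ} {g : ℝ}

lemma two_mul_sin_le_norm_sub {t : Fin n → ℝ} (ht : IsCyclicallySeparated g t) (hg : 0 ≤ g)
    {c : ℕ} {i j : Fin n} (hij : i < j) (hc : (i : ℕ) + c ≤ j) (hc' : (j : ℕ) + c ≤ i + n) :
    2 * Real.sin (π * (c * g)) ≤ ‖(𝐞 (t i) : ℂ) - 𝐞 (t j)‖ := by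
  obtain ⟨hlower, hupper⟩ := ht hij
  have hgap : (c : ℝ) ≤ (j : ℕ) - (i : ℕ) := by
    rw [le_sub_iff_add_le']
    exact_mod_cast hc
  have hwrap : (c : ℝ) ≤ n - ((j : ℕ) - (i : ℕ)) := by
    have : ((j : ℕ) + c : ℝ) ≤ (i : ℕ) + n := mod_cast hc'
    linarith
  have hlower' : c * g ≤ t j - t i := (mul_le_mul_of_nonneg_right hgap hg).trans hlower
  have hupper' : t j - t i ≤ 1 - c * g := by
    linarith [mul_le_mul_of_nonneg_right hwrap hg]
  have hcg : 0 ≤ π * (c * g) := by positivity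
  rw [norm_sub_rev, norm_fourierChar_sub_fourierChar]
  refine mul_le_mul_of_nonneg_left (le_trans ?_ (le_abs_self _)) zero_le_two
  exact sin_le_sin_of_le_of_le_pi_sub (by linarith [Real.pi_pos]) (by gcongr)
    (by linarith [mul_le_mul_of_nonneg_left hupper' Real.pi_pos.le])

lemma mul_le_one {t : Fin n → ℝ} (ht : IsCyclicallySeparated g t) (hn : 2 ≤ n) : n * g ≤ 1 := by
  obtain ⟨hlower, hupper⟩ := ht (i := ⟨0, by omega⟩) (j := ⟨1, by omega⟩) Nat.zero_lt_one
  linarith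

lemma pairwise_two_mul_sin_le_norm_sub {t : Fin n → ℝ} (ht : IsCyclicallySeparated g t)
    (hg : 0 ≤ g) :
    Pairwise fun i j => 2 * Real.sin (π * g) ≤ ‖(𝐞 (t i) : ℂ) - 𝐞 (t j)‖ := by
  intro i j hij
  wlog hlt : i < j generalizing i j
  · rw [norm_sub_rev]
    exact this hij.symm (lt_of_le_of_ne (not_lt.1 hlt) hij.symm)
  simpa only [Nat.cast_one, one_mul] using
    ht.two_mul_sin_le_norm_sub hg (c := 1) hlt hlt (by omega)

lemma le_norm_sub_of_not_adjacent {t : Fin (n + 1) → ℝ} (ht : IsCyclicallySeparated g t)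
    (hg : 0 ≤ g) (hg' : g ≤ 1 / 4) {i j : Fin (n + 1)} (hij : i ≠ j) (hij' : j ≠ i + 1)
    (hji' : i ≠ j + 1) :
    √2 * (2 * Real.sin (π * g)) ≤ ‖(𝐞 (t i) : ℂ) - 𝐞 (t j)‖ := by
  wlog hlt : i < j generalizing i j
  · rw [norm_sub_rev]
    exact this hij.symm hji' hij' (lt_of_le_of_ne (not_lt.1 hlt) hij.symm)
  have hgap : (i : ℕ) + 2 ≤ j ∧ (j : ℕ) + 2 ≤ i + (n + 1) := by
    rw [Ne, Fin.ext_iff, Fin.val_add_one] at hij' hji'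
    simp only [Fin.ext_iff, Fin.val_last] at hij' hji'
    have := j.isLt
    split_ifs at hij' hji' <;> omega
  calc √2 * (2 * Real.sin (π * g)) ≤ 2 * Real.sin (2 * (π * g)) := by
        linarith [sqrt_two_mul_sin_le_sin_two_mul (x := π * g) (by positivity)
          (by linarith [mul_le_mul_of_nonneg_left hg' Real.pi_pos.le])]
    _ = 2 * Real.sin (π * ((2 : ℕ) * g)) := by
        rw [Nat.cast_two, mul_left_comm]
    _ ≤ ‖(𝐞 (t i) : ℂ) - 𝐞 (t j)‖ := ht.two_mul_sin_le_norm_sub hg hlt hgap.1 hgap.2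

lemma card_close_le_two {t : Fin (n + 1) → ℝ} (ht : IsCyclicallySeparated g t)
    (hg : 0 ≤ g) (hg' : g ≤ 1 / 4) (m : Fin (n + 1)) :
    #{j ∈ univ.erase m | ‖(𝐞 (t m) : ℂ) - 𝐞 (t j)‖ < √2 * (2 * Real.sin (π * g))} ≤ 2 := by
  refine (card_le_card fun j hj => ?_).trans (card_le_two (a := m + 1) (b := m - 1))
  obtain ⟨hjm, hclose⟩ := mem_filter.1 hj
  rw [mem_insert, mem_singleton, eq_sub_iff_add_eq]
  by_contra! hnot
  exact hclose.not_ge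
    (ht.le_norm_sub_of_not_adjacent hg hg' (ne_of_mem_erase hjm).symm hnot.1 hnot.2.symm)

end IsCyclicallySeparated

theorem vandermonde_inverse_bound_general {M : ℕ} (hM : 1 ≤ M) {g : ℝ} (hg : 0 < g)
    {t : Fin (2 * M + 1) → ℝ} (ht : IsCyclicallySeparated g t) :
    IsUnit (vanderMat fun m => (𝐞 (t m) : ℂ)) ∧
      ∀ k, ∑ m, ‖(vanderMat fun m => (𝐞 (t m) : ℂ))⁻¹ k m‖ ≤
        Real.sin (π * g) ^ (-(2 * (M : ℤ))) := by
  have hng : (2 * M + 1) * g ≤ 1 := mod_cast ht.mul_le_one (by omega)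
  have hM' : (1 : ℝ) ≤ M := mod_cast hM
  have hsin : 0 < Real.sin (π * g) :=
    Real.sin_pos_of_pos_of_lt_pi (by positivity) (mul_lt_of_lt_one_right Real.pi_pos (by nlinarith))
  have hsep := ht.pairwise_two_mul_sin_le_norm_sub hg.le
  refine ⟨isUnit_vanderMat (injective_of_pairwise_le_norm_sub (by positivity) hsep), fun k => ?_⟩
  have hpow : Real.sin (π * g) ^ (-(2 * (M : ℤ))) = (Real.sin (π * g) ^ (2 * M))⁻¹ := by
    rw [zpow_neg]
    norm_cast
  rw [hpow]
  rcases hM.eq_or_lt with rfl | hM2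
  · exact sum_norm_vanderMat_inv_le_of_three (fun j => Circle.norm_coe _) hsin hsep k
  · have hM2' : (2 : ℝ) ≤ M := mod_cast hM2
    exact sum_norm_vanderMat_inv_le_of_card_close_le_two hM2 (fun j => (Circle.norm_coe _).le) hsin
      hsep (ht.card_close_le_two hg.le (by nlinarith)) k

end CyclicSeparation

/-- **Bound on the inverse of the Vandermonde matrix.**  With `m/ε = L_m/Δx + α_m`
(`L_m ∈ ℤ`, `α_m ∈ [0,1/Δx)`), `w_m = e^{2πi L_m δx/Δx}`, and `V_{m,k} = w_m^k`
(`m = -M,…,M`, `k = 0,…,2M`), the matrix `V` is invertible and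
`‖V⁻¹‖_∞ ≤ (sin(π(1/ε-1/Δx)δx))^{-2M}`, where `‖·‖_∞` is the maximum absolute
row sum. -/
theorem vandermonde_inverse_bound
    (ε Δx δx : ℝ) (M : ℕ)
    (hM : 1 ≤ M) (hε : 0 < ε) (hΔx : ε < Δx)
    (hδx : 0 < δx) (hδx2 : δx ≤ ε / (2 * M + 1))
    (L : ℤ → ℤ) (α : ℤ → ℝ)
    (hdecomp : ∀ m : ℤ, |m| ≤ (M : ℤ) →
      (m : ℝ) / ε = (L m : ℝ) / Δx + α m ∧ 0 ≤ α m ∧ α m < 1 / Δx) :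
    IsUnit (vanderMat fun m : Fin (2 * M + 1) =>
      Complex.exp (2 * Real.pi * Complex.I * ((L ((m : ℤ) - (M : ℤ)) : ℝ) * δx / Δx))) ∧
    ∀ i : Fin (2 * M + 1),
      ∑ k : Fin (2 * M + 1),
        ‖(vanderMat fun m : Fin (2 * M + 1) =>
            Complex.exp (2 * Real.pi * Complex.I *
              ((L ((m : ℤ) - (M : ℤ)) : ℝ) * δx / Δx)))⁻¹ i k‖ ≤
      Real.sin (Real.pi * (1 / ε - 1 / Δx) * δx) ^ (-(2 * (M : ℤ))) := by
  have hg : 0 < (1 / ε - 1 / Δx) * δx :=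
    mul_pos (sub_pos.2 (one_div_lt_one_div_of_lt hε hΔx)) hδx
  have hsep := isCyclicallySeparated_of_frequency_decomposition hε hδx.le hδx2 hdecomp
  simpa only [coe_fourierChar_eq_exp, ofReal_div, ofReal_mul, mul_assoc] using
    vandermonde_inverse_bound_general hM hg hsep
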